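/- arXiv:2108.12776 — 7 statements merged into one kernel-verified Lean document; each statement's English description precedes it below -/
import Mathlib

section
/- Let ε > 1 and b ∈ ℝ. Then the polynomial P(λ) = λ⁴ + (1−ε)λ³ + (2 + b² − ε)λ² + (1−ε)λ + 1 has a complex root z with Re z ≥ (ε−1)/4 > 0. -/
lemma exists_sq_re_nonneg (a : ℂ) : ∃ s : ℂ, s ^ 2 = a ∧ 0 ≤ s.re := by
  obtain ⟨s, hs⟩ := IsAlgClosed.exists_pow_nat_eq a (n := 2) (by norm_num)
  rcases le_total 0 s.re with h | h
  · exact ⟨s, hs, h⟩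
  · exact ⟨-s, by rw [neg_sq, hs], by simpa using h⟩

/-- For ε > 1, the characteristic polynomial has a root with real part ≥ (ε−1)/4 > 0. -/
theorem exists_root_re_ge_of_eps_gt_one (ε b : ℝ) (hε : 1 < ε) :
    ∃ z : ℂ, z ^ 4 + (1 - ε) * z ^ 3 + (2 + b ^ 2 - ε) * z ^ 2 + (1 - ε) * z + 1 = 0 ∧
      (ε - 1) / 4 ≤ z.re ∧ 0 < (ε - 1) / 4 := by
  obtain ⟨s, hs, hs0⟩ := exists_sq_re_nonneg (((ε : ℂ) - 1) ^ 2 - 4 * ((b : ℂ) ^ 2 - ε))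
  obtain ⟨w, hw⟩ : ∃ w : ℂ, w = ((1 / 2 : ℝ) : ℂ) * (((ε - 1 : ℝ) : ℂ) + s) := ⟨_, rfl⟩
  obtain ⟨t, ht, ht0⟩ := exists_sq_re_nonneg (w ^ 2 - 4)
  obtain ⟨z, hz⟩ : ∃ z : ℂ, z = ((1 / 2 : ℝ) : ℂ) * (w + t) := ⟨_, rfl⟩
  have hwre : w.re = 1 / 2 * (ε - 1 + s.re) := by
    rw [hw, Complex.re_ofReal_mul, Complex.add_re, Complex.ofReal_re]
  have hzre : z.re = 1 / 2 * (w.re + t.re) := by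
    rw [hz, Complex.re_ofReal_mul, Complex.add_re]
  have h1 : w ^ 2 + (1 - ε) * w + (b ^ 2 - ε) = 0 := by
    rw [hw]; push_cast; linear_combination hs / 4
  have h2 : z ^ 2 - w * z + 1 = 0 := by
    rw [hz]; push_cast; linear_combination ht / 4
  refine ⟨z, ?_, by linarith, by linarith⟩
  linear_combination z ^ 2 * h1 + (z ^ 2 + 1 + w * z + (1 - ε) * z) * h2
end

section
/- Let ε = 1 and 0 < b < 1. Then the complex number z = (√(1−b²) + i√(3+b²))/2 is a root of the polynomial P(λ) = λ⁴ + (1 + b²)λ² + 1, and Re z > 0. -/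
/-- For ε = 1 and 0 < b < 1, the number (√(1−b²) + i√(3+b²))/2 is a root of
λ⁴ + (1+b²)λ² + 1, and it has positive real part. -/
theorem root_pos_re_eps_one_b_lt_one (b : ℝ) (hb0 : 0 < b) (hb1 : b < 1)
    (z : ℂ) (hz : z = (Real.sqrt (1 - b ^ 2) + Complex.I * Real.sqrt (3 + b ^ 2)) / 2) :
    z ^ 4 + (1 + b ^ 2) * z ^ 2 + 1 = 0 ∧ 0 < z.re := by
  have h1 : 0 < 1 - b ^ 2 := by nlinarith
  have h3 : 0 < 3 + b ^ 2 := by positivity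
  have hs := Real.sq_sqrt h1.le
  have ht := Real.sq_sqrt h3.le
  have hpos := Real.sqrt_pos.mpr h1
  generalize Real.sqrt (1 - b ^ 2) = s at *
  generalize Real.sqrt (3 + b ^ 2) = t at *
  constructor
  · have hs' : (s : ℂ) ^ 2 = 1 - b ^ 2 := by exact_mod_cast hs
    have ht' : (t : ℂ) ^ 2 = 3 + b ^ 2 := by exact_mod_cast ht
    have hI := Complex.I_sq
    have h2 : 2 * z ^ 2 + (1 + (b : ℂ) ^ 2) = Complex.I * s * t := by
      rw [hz]
      linear_combination (1 / 2) * hs' + (1 / 2) * (t : ℂ) ^ 2 * hI - (1 / 2) * ht'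
    have h4 : (2 * z ^ 2 + (1 + (b : ℂ) ^ 2)) ^ 2 = -((1 - b ^ 2) * (3 + b ^ 2)) := by
      rw [h2, mul_pow, mul_pow, hI, hs', ht']
      ring
    linear_combination (1 / 4) * h4
  · have : z = ((s / 2 : ℝ) : ℂ) + ((t / 2 : ℝ) : ℂ) * Complex.I := by
      rw [hz]; push_cast; ring
    rw [this]
    simp only [Complex.add_re, Complex.ofReal_re, Complex.re_ofReal_mul, Complex.I_re]
    linarith
end

section
/- Let u₀, x₀, v₀, y₀ ∈ ℝ and define u(t) = ½[(2u₀ − t u₀ + t v₀) cos t + (u₀ − v₀ + 2x₀ − t x₀ + t y₀) sin t] and v(t) = ½[(−t u₀ + 2v₀ + t v₀) cos t + (u₀ − v₀ − t x₀ + 2y₀ + t y₀) sin t]. Then u and v satisfy the system ü(t) + u(t) + u̇(t) = v̇(t) and v̈(t) + v(t) − v̇(t) = −u̇(t) for all t ∈ ℝ, together with the initial conditions u(0) = u₀, u̇(0) = x₀, v(0) = v₀, v̇(0) = y₀. -/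
theorem deriv_aux (f : ℝ → ℝ) (a b c d : ℝ)
    (hf : ∀ t, f t = (a + b*t) * Real.cos t + (c + d*t) * Real.sin t) (t : ℝ) :
    deriv f t = ((b + c) + d*t) * Real.cos t + ((d - a) + (-b)*t) * Real.sin t := by
  have hf' : f = fun t => (a + b*t) * Real.cos t + (c + d*t) * Real.sin t := funext hf
  have h1 : HasDerivAt (fun t : ℝ => a + b*t) (b*1) t :=
    ((hasDerivAt_id t).const_mul b).const_add a
  have h2 : HasDerivAt (fun t : ℝ => c + d*t) (d*1) t :=
    ((hasDerivAt_id t).const_mul d).const_add c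
  have h := (h1.mul (Real.hasDerivAt_cos t)).add (h2.mul (Real.hasDerivAt_sin t))
  rw [hf']
  refine h.deriv.trans ?_
  ring

/-- The explicit solution of the system ü + u + u̇ = v̇, v̈ + v − v̇ = −u̇ (the case
ε = 1, b = 1) with initial datum (u₀, x₀, v₀, y₀). -/
theorem explicit_solution_eps_one_b_one (u₀ x₀ v₀ y₀ : ℝ) (u v : ℝ → ℝ)
    (hu : ∀ t, u t = (1/2) * ((2*u₀ - t*u₀ + t*v₀) * Real.cos t
        + (u₀ - v₀ + 2*x₀ - t*x₀ + t*y₀) * Real.sin t))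
    (hv : ∀ t, v t = (1/2) * ((-(t*u₀) + 2*v₀ + t*v₀) * Real.cos t
        + (u₀ - v₀ - t*x₀ + 2*y₀ + t*y₀) * Real.sin t)) :
    (∀ t : ℝ, deriv (deriv u) t + u t + deriv u t = deriv v t) ∧
    (∀ t : ℝ, deriv (deriv v) t + v t - deriv v t = -(deriv u t)) ∧
    u 0 = u₀ ∧ deriv u 0 = x₀ ∧ v 0 = v₀ ∧ deriv v 0 = y₀ := by
  have du := deriv_aux u u₀ ((v₀ - u₀)/2) ((u₀ - v₀ + 2*x₀)/2) ((y₀ - x₀)/2)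
    (fun t => by rw [hu]; ring)
  have dv := deriv_aux v v₀ ((v₀ - u₀)/2) ((u₀ - v₀ + 2*y₀)/2) ((y₀ - x₀)/2)
    (fun t => by rw [hv]; ring)
  have ddu := deriv_aux _ _ _ _ _ du
  have ddv := deriv_aux _ _ _ _ _ dv
  refine ⟨fun t => ?_, fun t => ?_, ?_, ?_, ?_, ?_⟩
  · rw [ddu, du, dv, hu]; ring
  · rw [ddv, du, dv, hv]; ring
  · rw [hu]; simp
  · rw [du]; simp; ring
  · rw [hv]; simp
  · rw [dv]; simp; ring
end

section
/- Let 0 ≤ ε < 1 and 0 < b < √ε. Then the polynomial P(λ) = λ⁴ + (1−ε)λ³ + (2 + b² − ε)λ² + (1−ε)λ + 1 has a complex root z with Re z > 0; in fact it has a root with Re z = (ε − 1 + √((1+ε)² − 4b²))/4 > 0. -/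
/-- For 0 ≤ ε < 1 and 0 < b < √ε, the characteristic polynomial has a root with
positive real part, namely one with real part (ε − 1 + √((1+ε)² − 4b²))/4 > 0. -/
theorem exists_root_pos_re_of_b_lt_sqrt_eps (ε b : ℝ)
    (hε0 : 0 ≤ ε) (hε1 : ε < 1) (hb0 : 0 < b) (hb : b < Real.sqrt ε) :
    ∃ z : ℂ, z ^ 4 + (1 - ε) * z ^ 3 + (2 + b ^ 2 - ε) * z ^ 2 + (1 - ε) * z + 1 = 0 ∧
      z.re = (ε - 1 + Real.sqrt ((1 + ε) ^ 2 - 4 * b ^ 2)) / 4 ∧ 0 < z.re := by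
  have hb2 : b ^ 2 < ε := (Real.lt_sqrt hb0.le).1 hb
  have hD : 0 ≤ (1 + ε) ^ 2 - 4 * b ^ 2 := by nlinarith [sq_nonneg (1 - ε)]
  have hs2 := Real.sq_sqrt hD
  have hs0 := Real.sqrt_nonneg ((1 + ε) ^ 2 - 4 * b ^ 2)
  set s := Real.sqrt ((1 + ε) ^ 2 - 4 * b ^ 2) with hs
  have h1 : 1 - ε < s := by
    apply lt_of_pow_lt_pow_left₀ 2 hs0
    nlinarith
  have h2 : s < 1 + ε := by
    apply lt_of_pow_lt_pow_left₀ 2 (by linarith)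
    nlinarith [pow_pos hb0 2]
  obtain ⟨x, hx⟩ : ∃ x, x = (ε - 1 + s) / 4 := ⟨_, rfl⟩
  have hx0 : 0 < x := by linarith
  have hx1 : x < 1 := by linarith
  have hq : 4 * x ^ 2 + 2 * (1 - ε) * x + (b ^ 2 - ε) = 0 := by
    rw [hx]; linear_combination hs2 / 4
  have hy := Real.sq_sqrt (show 0 ≤ 1 - x ^ 2 by nlinarith)
  set y := Real.sqrt (1 - x ^ 2)
  refine ⟨⟨x, y⟩, ?_, hx, hx0⟩
  have hz : (⟨x, y⟩ : ℂ) ^ 2 - 2 * x * ⟨x, y⟩ + 1 = 0 := by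
    apply Complex.ext
    · simp [pow_two]; nlinarith
    · simp [pow_two]; ring
  have hqc : 4 * (x : ℂ) ^ 2 + 2 * (1 - ε) * x + (b ^ 2 - ε) = 0 := by exact_mod_cast hq
  generalize (⟨x, y⟩ : ℂ) = z at hz
  linear_combination (z ^ 2 + (1 - ε + 2 * x) * z + 1) * hz + z ^ 2 * hqc
end

section
/- Let 0 ≤ ε < 1 and b > √ε. Then every complex root z of the polynomial P(λ) = λ⁴ + (1−ε)λ³ + (2 + b² − ε)λ² + (1−ε)λ + 1 satisfies Re z < 0. -/
/-- For 0 ≤ ε < 1 and b > √ε, every root of the characteristic polynomial has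
negative real part. -/
theorem roots_neg_re_of_b_gt_sqrt_eps (ε b : ℝ)
    (hε0 : 0 ≤ ε) (hε1 : ε < 1) (hb : Real.sqrt ε < b) :
    ∀ z : ℂ, z ^ 4 + (1 - ε) * z ^ 3 + (2 + b ^ 2 - ε) * z ^ 2 + (1 - ε) * z + 1 = 0 →
      z.re < 0 := by
  intro z hz
  have hc : ε < b ^ 2 := Real.lt_sq_of_sqrt_lt hb
  have hz0 : z ≠ 0 := by
    rintro rfl
    norm_num at hz
  obtain ⟨w, hw⟩ : ∃ w : ℂ, w = z + z⁻¹ := ⟨_, rfl⟩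
  have hq : w ^ 2 + ((1 - ε : ℝ) : ℂ) * w + ((b ^ 2 - ε : ℝ) : ℂ) = 0 := by
    have h2 : z ^ 2 * (w ^ 2 + ((1 - ε : ℝ) : ℂ) * w + ((b ^ 2 - ε : ℝ) : ℂ)) = 0 := by
      rw [← hz, hw]
      push_cast
      field_simp
      ring
    exact (mul_eq_zero.mp h2).resolve_left (pow_ne_zero 2 hz0)
  have hre := congrArg Complex.re hq
  have him := congrArg Complex.im hq
  simp only [pow_two w, Complex.add_re, Complex.add_im, Complex.mul_re, Complex.mul_im,
    Complex.ofReal_re, Complex.ofReal_im, Complex.zero_re, Complex.zero_im] at hre him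
  by_contra! hx
  have hp : 0 ≤ w.re := by
    rw [hw, Complex.add_re, Complex.inv_re]
    have := Complex.normSq_nonneg z
    positivity
  have hf : w.im * (2 * w.re + (1 - ε)) = 0 := by linarith
  have hi : w.im = 0 := (mul_eq_zero.mp hf).resolve_right (by linarith)
  rw [hi] at hre
  nlinarith [mul_nonneg hp hp, mul_nonneg (by linarith : 0 ≤ 1 - ε) hp]
end

section
/- Let 0 ≤ ε < 1 and b > √ε with b ≠ (1+ε)/2. Then the polynomial P(λ) = λ⁴ + (1−ε)λ³ + (2 + b² − ε)λ² + (1−ε)λ + 1 has a complex root z with Re z > (ε−1)/4. -/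
/-- Every complex number has a square root with nonnegative real part. -/
lemma exists_sq_re_nonneg_s17 (c : ℂ) : ∃ r : ℂ, r ^ 2 = c ∧ 0 ≤ r.re := by
  obtain ⟨r, hr⟩ := IsAlgClosed.exists_pow_nat_eq c (n := 2) (by norm_num)
  rcases le_total 0 r.re with h | h
  · exact ⟨r, hr, h⟩
  · exact ⟨-r, by rw [← hr]; ring, by simpa using h⟩

/-- For 0 ≤ ε < 1 and b > √ε with b ≠ (1+ε)/2, the characteristic polynomial has a root
with real part strictly greater than (ε−1)/4. -/
theorem exists_root_re_gt_optimal (ε b : ℝ)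
    (hε0 : 0 ≤ ε) (hε1 : ε < 1) (hb : Real.sqrt ε < b) (hbne : b ≠ (1 + ε) / 2) :
    ∃ z : ℂ, z ^ 4 + (1 - ε) * z ^ 3 + (2 + b ^ 2 - ε) * z ^ 2 + (1 - ε) * z + 1 = 0 ∧
      (ε - 1) / 4 < z.re := by
  have hb0 : 0 < b := lt_of_le_of_lt (Real.sqrt_nonneg ε) hb
  -- `d` is a square root of the discriminant of `w² + (1-ε) w + (b²-ε)`
  obtain ⟨d, hd, hdre⟩ := exists_sq_re_nonneg_s17 (((1 + ε) ^ 2 - 4 * b ^ 2 : ℝ) : ℂ)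
  have hne : (1 + ε) ^ 2 - 4 * b ^ 2 ≠ 0 := by
    intro h
    have h1 : ((1 + ε) / 2 - b) * (1 + ε + 2 * b) = 0 := by linear_combination h / 2
    rcases mul_eq_zero.mp h1 with h2 | h2
    · exact hbne (by linarith)
    · linarith
  obtain ⟨w, hw⟩ : ∃ w : ℂ, w = (-(1 - ε) + d) / 2 := ⟨_, rfl⟩
  obtain ⟨r, hr, hrre⟩ := exists_sq_re_nonneg_s17 (w ^ 2 - 4)
  have hwq : w ^ 2 + (1 - ε) * w + (b ^ 2 - ε) = 0 := by
    push_cast at hd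
    rw [hw]
    linear_combination hd / 4
  have hwre : w.re = (-(1 - ε) + d.re) / 2 := by
    rw [hw]; simp
  have hwim : w.im = d.im / 2 := by
    rw [hw]; simp
  refine ⟨(w + r) / 2, ?_, ?_⟩
  · obtain ⟨z, hz⟩ : ∃ z : ℂ, z = (w + r) / 2 := ⟨_, rfl⟩
    have hzq : z ^ 2 - w * z + 1 = 0 := by
      rw [hz]; linear_combination hr / 4
    rw [← hz]
    linear_combination (z ^ 2 + (w + (1 - ε)) * z + 1) * hzq + z ^ 2 * hwq
  · have hre : ((w + r) / 2).re = (w.re + r.re) / 2 := by simp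
    rw [hre]
    by_contra hcon
    have hd0 : d.re = 0 := by linarith
    have hr0 : r.re = 0 := by linarith
    have h1 := congrArg Complex.im hr
    simp [pow_two, hr0] at h1
    have h2 : w.re * w.im = 0 := by linarith
    rw [hwre, hwim, hd0] at h2
    have h3 : d.im = 0 := by
      rcases mul_eq_zero.mp h2 with h | h <;> linarith
    have h4 : d = 0 := Complex.ext hd0 h3
    rw [h4] at hd
    apply hne
    have h5 : (((1 + ε) ^ 2 - 4 * b ^ 2 : ℝ) : ℂ) = 0 := by rw [← hd]; ring
    exact_mod_cast h5
end

section
/- Let 0 ≤ ε < 1 and b = (1+ε)/2. Then the polynomial P(λ) = λ⁴ + (1−ε)λ³ + (2 + b² − ε)λ² + (1−ε)λ + 1 factors as P(λ) = (λ² + ((1−ε)/2)λ + 1)²; equivalently, its roots are μ = (ε − 1 + i√(15 + 2ε − ε²))/4 and its conjugate μ̄, each with algebraic multiplicity 2, and both roots have real part (ε−1)/4. -/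
open Polynomial in
theorem rootMultiplicity_helper (a c : ℂ) (h : a ≠ c) :
    (((X - C a) * (X - C c)) ^ 2 : Polynomial ℂ).rootMultiplicity a = 2 := by
  have h1 : ((X - C a) ^ 2 * (X - C c) ^ 2 : Polynomial ℂ) ≠ 0 :=
    mul_ne_zero (pow_ne_zero _ (X_sub_C_ne_zero a)) (pow_ne_zero _ (X_sub_C_ne_zero c))
  rw [mul_pow, rootMultiplicity_mul h1, rootMultiplicity_X_sub_C_pow,
    rootMultiplicity_eq_zero]
  simp [IsRoot, sub_eq_zero, h]

open Polynomial Complex in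
/-- For 0 ≤ ε < 1 and b = (1+ε)/2, the characteristic polynomial factors as
(λ² + ((1−ε)/2)λ + 1)²; its roots are μ = (ε − 1 + i√(15 + 2ε − ε²))/4 and its conjugate,
each with algebraic multiplicity 2, and both have real part (ε−1)/4. -/
theorem charpoly_factors_at_optimal_b (ε b : ℝ)
    (hε0 : 0 ≤ ε) (hε1 : ε < 1) (hb : b = (1 + ε) / 2)
    (μ : ℂ) (hμ : μ = ((ε : ℂ) - 1 + I * Real.sqrt (15 + 2 * ε - ε ^ 2)) / 4) :
    ((X ^ 4 + C ((1 : ℂ) - ε) * X ^ 3 + C (2 + (b : ℂ) ^ 2 - ε) * X ^ 2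
        + C ((1 : ℂ) - ε) * X + 1 : Polynomial ℂ) =
      (X ^ 2 + C (((1 : ℂ) - ε) / 2) * X + 1) ^ 2) ∧
    (∀ z : ℂ, (X ^ 4 + C ((1 : ℂ) - ε) * X ^ 3 + C (2 + (b : ℂ) ^ 2 - ε) * X ^ 2
        + C ((1 : ℂ) - ε) * X + 1 : Polynomial ℂ).IsRoot z ↔
      z = μ ∨ z = (starRingEnd ℂ) μ) ∧
    (X ^ 4 + C ((1 : ℂ) - ε) * X ^ 3 + C (2 + (b : ℂ) ^ 2 - ε) * X ^ 2
        + C ((1 : ℂ) - ε) * X + 1 : Polynomial ℂ).rootMultiplicity μ = 2 ∧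
    (X ^ 4 + C ((1 : ℂ) - ε) * X ^ 3 + C (2 + (b : ℂ) ^ 2 - ε) * X ^ 2
        + C ((1 : ℂ) - ε) * X + 1 : Polynomial ℂ).rootMultiplicity ((starRingEnd ℂ) μ) = 2 ∧
    μ.re = (ε - 1) / 4 ∧ ((starRingEnd ℂ) μ).re = (ε - 1) / 4 := by
  have hpos : 0 < 15 + 2 * ε - ε ^ 2 := by nlinarith
  have hs0 : 0 < Real.sqrt (15 + 2 * ε - ε ^ 2) := Real.sqrt_pos.mpr hpos
  have hs2 : Real.sqrt (15 + 2 * ε - ε ^ 2) ^ 2 = 15 + 2 * ε - ε ^ 2 := Real.sq_sqrt hpos.le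
  generalize Real.sqrt (15 + 2 * ε - ε ^ 2) = s at *
  have hs2c : (s : ℂ) ^ 2 = 15 + 2 * ε - ε ^ 2 := by exact_mod_cast hs2
  have hν : (starRingEnd ℂ) μ = ((ε : ℂ) - 1 - I * s) / 4 := by
    rw [hμ]
    have h4 : (starRingEnd ℂ) (4 : ℂ) = 4 := map_ofNat _ 4
    simp [sub_eq_add_neg, h4]
  have hre : μ.re = (ε - 1) / 4 := by
    have : μ = (((ε - 1) / 4 : ℝ) : ℂ) + ((s / 4 : ℝ) : ℂ) * I := by
      rw [hμ]; push_cast; ring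
    rw [this]; simp
  have hne : μ ≠ (starRingEnd ℂ) μ := by
    rw [hν, hμ]
    intro h
    have h2 : I * (s : ℂ) = 0 := by linear_combination 2 * h
    have h3 : (s : ℂ) ≠ 0 := by exact_mod_cast hs0.ne'
    exact mul_ne_zero I_ne_zero h3 h2
  have hsum : μ + (starRingEnd ℂ) μ = -(((1 : ℂ) - ε) / 2) := by rw [hν, hμ]; ring
  have hprod : μ * (starRingEnd ℂ) μ = 1 := by
    rw [hν, hμ]
    linear_combination (1 / 16 : ℂ) * hs2c - (s : ℂ) ^ 2 / 16 * I_sq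
  have hq : (X ^ 2 + C (((1 : ℂ) - ε) / 2) * X + 1 : Polynomial ℂ) =
      (X - C μ) * (X - C ((starRingEnd ℂ) μ)) := by
    have e1 : (C (((1 : ℂ) - ε) / 2) : Polynomial ℂ) = -(C μ + C ((starRingEnd ℂ) μ)) := by
      rw [← C_add, hsum, C_neg, neg_neg]
    have e2 : (C μ * C ((starRingEnd ℂ) μ) : Polynomial ℂ) = 1 := by
      rw [← C_mul, hprod, C_1]
    rw [e1]
    linear_combination -e2
  have hP : (X ^ 4 + C ((1 : ℂ) - ε) * X ^ 3 + C (2 + (b : ℂ) ^ 2 - ε) * X ^ 2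
        + C ((1 : ℂ) - ε) * X + 1 : Polynomial ℂ) =
      (X ^ 2 + C (((1 : ℂ) - ε) / 2) * X + 1) ^ 2 := by
    have e1 : (C ((1 : ℂ) - ε) : Polynomial ℂ) = 2 * C (((1 : ℂ) - ε) / 2) := by
      rw [two_mul, ← C_add]; congr 1; ring
    have e2 : (C (2 + (b : ℂ) ^ 2 - ε) : Polynomial ℂ) = 2 + C (((1 : ℂ) - ε) / 2) ^ 2 := by
      rw [← C_pow, show (2 : Polynomial ℂ) = C 2 from rfl, ← C_add, hb]
      congr 1; push_cast; ring
    rw [e1, e2]; ring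
  refine ⟨hP, ?_, ?_, ?_, hre, by rw [conj_re]; exact hre⟩
  · intro z
    rw [hP, hq]
    simp [IsRoot, sub_eq_zero]
  · rw [hP, hq]; exact rootMultiplicity_helper _ _ hne
  · rw [hP, hq, mul_comm]; exact rootMultiplicity_helper _ _ hne.symm
end
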